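/- Let k ∈ ℕ₀, let a₀,…,a_{k−1} be complex numbers with |a_j| < 1, let Φ_j be generated by Φ₀ = 1, Φ_j(z) = zΦ_{j−1}(z) − a_{j−1}Φ*_{j−1}(z), and let Ψ_j be generated by Ψ₀ = 1, Ψ_j(z) = zΨ_{j−1}(z) + a_{j−1}Ψ*_{j−1}(z). Then Φ*_k(z) + Ψ*_k(z) has no zeros in the closed unit disk and |z·(Φ_k(z) − Ψ_k(z))| < |Φ*_k(z) + Ψ*_k(z)| for all |z| ≤ 1. -/

import Mathlib

/-!
Reversing the Szegő recurrence gives `Φ*_{j+1} = Φ*_j - conj(a_j) z Φ_j`. Hence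
`D_j = Φ_j - Ψ_j` and `S_j = Φ*_j + Ψ*_j` satisfy a closed recurrence: `D_{j+1} = z D_j - a_j S_j`
and `S_{j+1} = S_j - conj(a_j) z D_j`, with `D_0 = 0` and `S_0 = 2`. So `D_{j+1} / S_{j+1}` is the
image of `z D_j / S_j` under the automorphism `w ↦ (w - a_j) / (1 - conj(a_j) w)` of the unit disk,
and for `|z| ≤ 1` the inequality `|z D_j| < |S_j|` propagates in `j`; being strict, it forces
`S_j ≠ 0`.
-/

open Polynomial

/-- The reversed polynomial `P*(z) = z^n conj(P(1/conj z))` at degree `n`. -/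
noncomputable def pstar (n : ℕ) (P : Polynomial ℂ) : Polynomial ℂ :=
  Polynomial.reflect n (P.map (starRingEnd ℂ))

open scoped ComplexConjugate

section DiskAutomorphism

variable {𝕜 : Type*} [RCLike 𝕜]

lemma norm_sub_conj_mul_sq_sub_norm_sub_mul_sq (a u s : 𝕜) :
    ‖s - conj a * u‖ ^ 2 - ‖u - a * s‖ ^ 2 = (1 - ‖a‖ ^ 2) * (‖s‖ ^ 2 - ‖u‖ ^ 2) := by
  apply RCLike.ofReal_injective (K := 𝕜)
  push_cast
  simp only [← RCLike.mul_conj, map_sub, map_mul, RCLike.conj_conj]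
  ring

/-- The homogeneous form, free of denominators, of the fact that `w ↦ (w - a) / (1 - conj a * w)`
maps the open unit disk into itself, with `w = u / s`. -/
lemma norm_sub_mul_lt_norm_sub_conj_mul {a u s : 𝕜} (ha : ‖a‖ < 1) (hus : ‖u‖ < ‖s‖) :
    ‖u - a * s‖ < ‖s - conj a * u‖ := by
  have ha' : 0 < 1 - ‖a‖ ^ 2 := sub_pos.2 (pow_lt_one₀ (norm_nonneg a) ha two_ne_zero)
  have hus' : 0 < ‖s‖ ^ 2 - ‖u‖ ^ 2 :=
    sub_pos.2 (pow_lt_pow_left₀ hus (norm_nonneg u) two_ne_zero)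
  refine lt_of_pow_lt_pow_left₀ 2 (norm_nonneg _) (sub_pos.1 ?_)
  rw [norm_sub_conj_mul_sq_sub_norm_sub_mul_sq]
  exact mul_pos ha' hus'

end DiskAutomorphism

section Reversal

variable {n : ℕ} {P : ℂ[X]}

lemma natDegree_pstar_le (hP : P.natDegree ≤ n) : (pstar n P).natDegree ≤ n :=
  natDegree_reflect_le.trans (max_le le_rfl (natDegree_map_le.trans hP))

lemma pstar_pstar (n : ℕ) (P : ℂ[X]) : pstar n (pstar n P) = P := by
  ext i
  simp [pstar]

lemma pstar_one (n : ℕ) : pstar n 1 = X ^ n := by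
  simp [pstar]

lemma pstar_sub (n : ℕ) (P Q : ℂ[X]) : pstar n (P - Q) = pstar n P - pstar n Q := by
  ext i
  simp [pstar]

lemma pstar_C_mul (n : ℕ) (c : ℂ) (P : ℂ[X]) : pstar n (C c * P) = C (conj c) * pstar n P := by
  simp [pstar]

lemma pstar_mul {m n : ℕ} {P Q : ℂ[X]} (hP : P.natDegree ≤ m) (hQ : Q.natDegree ≤ n) :
    pstar (m + n) (P * Q) = pstar m P * pstar n Q := by
  rw [pstar, Polynomial.map_mul,
    reflect_mul _ _ (natDegree_map_le.trans hP) (natDegree_map_le.trans hQ), pstar, pstar]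

lemma pstar_succ_X_mul (hP : P.natDegree ≤ n) : pstar (n + 1) (X * P) = pstar n P := by
  have hX : pstar 1 X = 1 := by simp [pstar]
  rw [add_comm, pstar_mul natDegree_X_le hP, hX, one_mul]

lemma pstar_succ_pstar (hP : P.natDegree ≤ n) : pstar (n + 1) (pstar n P) = X * P := by
  rw [← pstar_succ_X_mul hP, pstar_pstar]

end Reversal

/-- One step `P ↦ z P - α P*` of the Szegő recurrence with Verblunsky coefficient `α`, from degree
`n` to degree `n + 1`; the second kind recurrence is the step with coefficient `-α`. -/
noncomputable def szegoStep (n : ℕ) (α : ℂ) (P : ℂ[X]) : ℂ[X] :=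
  X * P - C α * pstar n P

section SzegoStep

variable {n : ℕ} {P Q : ℂ[X]}

lemma natDegree_szegoStep_le (α : ℂ) (hP : P.natDegree ≤ n) :
    (szegoStep n α P).natDegree ≤ n + 1 := by
  have hX : (X * P).natDegree ≤ n + 1 :=
    (natDegree_mul_le_of_le natDegree_X_le hP).trans_eq (add_comm 1 n)
  have hC : (C α * pstar n P).natDegree ≤ n + 1 :=
    (natDegree_C_mul_le _ _).trans ((natDegree_pstar_le hP).trans n.le_succ)
  exact (natDegree_sub_le_of_le hX hC).trans_eq (max_self _)

lemma pstar_szegoStep (α : ℂ) (hP : P.natDegree ≤ n) :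
    pstar (n + 1) (szegoStep n α P) = pstar n P - C (conj α) * (X * P) := by
  rw [szegoStep, pstar_sub, pstar_C_mul, pstar_succ_X_mul hP, pstar_succ_pstar hP]

lemma szegoStep_sub_szegoStep_neg (n : ℕ) (α : ℂ) (P Q : ℂ[X]) :
    szegoStep n α P - szegoStep n (-α) Q = X * (P - Q) - C α * (pstar n P + pstar n Q) := by
  rw [szegoStep, szegoStep, C_neg]
  ring

lemma pstar_szegoStep_add_pstar_szegoStep_neg (α : ℂ)
    (hP : P.natDegree ≤ n) (hQ : Q.natDegree ≤ n) :
    pstar (n + 1) (szegoStep n α P) + pstar (n + 1) (szegoStep n (-α) Q) =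
      pstar n P + pstar n Q - C (conj α) * (X * (P - Q)) := by
  rw [pstar_szegoStep α hP, pstar_szegoStep (-α) hQ, map_neg, C_neg]
  ring

lemma norm_eval_szegoStep_sub_lt {α z : ℂ} (hα : ‖α‖ < 1)
    (hP : P.natDegree ≤ n) (hQ : Q.natDegree ≤ n)
    (h : ‖z * (P - Q).eval z‖ < ‖(pstar n P + pstar n Q).eval z‖) :
    ‖(szegoStep n α P - szegoStep n (-α) Q).eval z‖ <
      ‖(pstar (n + 1) (szegoStep n α P) + pstar (n + 1) (szegoStep n (-α) Q)).eval z‖ := by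
  rw [szegoStep_sub_szegoStep_neg, pstar_szegoStep_add_pstar_szegoStep_neg α hP hQ]
  simpa only [eval_sub, eval_add, eval_mul, eval_X, eval_C] using
    norm_sub_mul_lt_norm_sub_conj_mul hα h

end SzegoStep

/-- `Φ 0, …, Φ k` are the polynomials generated from `1` by the Szegő recurrence with Verblunsky
coefficients `a 0, …, a (k - 1)`; the later terms of both sequences are unconstrained. The second
kind polynomials of `a` are the sequences satisfying `IsSzegoSeq k (-a)`. -/
structure IsSzegoSeq (k : ℕ) (a : ℕ → ℂ) (Φ : ℕ → ℂ[X]) : Prop where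
  zero : Φ 0 = 1
  succ : ∀ j < k, Φ (j + 1) = szegoStep j (a j) (Φ j)

namespace IsSzegoSeq

variable {j k : ℕ} {a : ℕ → ℂ} {Φ Ψ : ℕ → ℂ[X]}

lemma natDegree_le (hΦ : IsSzegoSeq k a Φ) (hj : j ≤ k) : (Φ j).natDegree ≤ j := by
  induction j with
  | zero => rw [hΦ.zero, natDegree_one]
  | succ j ih =>
    rw [hΦ.succ j hj]
    exact natDegree_szegoStep_le (a j) (ih (Nat.le_of_succ_le hj))

theorem norm_mul_eval_sub_lt (ha : ∀ j < k, ‖a j‖ < 1) (hΦ : IsSzegoSeq k a Φ)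
    (hΨ : IsSzegoSeq k (-a) Ψ) {z : ℂ} (hz : ‖z‖ ≤ 1) (hj : j ≤ k) :
    ‖z * (Φ j - Ψ j).eval z‖ < ‖(pstar j (Φ j) + pstar j (Ψ j)).eval z‖ := by
  induction j with
  | zero => simp [hΦ.zero, hΨ.zero, pstar_one]
  | succ j ih =>
    have hj' : j ≤ k := Nat.le_of_succ_le hj
    rw [hΦ.succ j hj, hΨ.succ j hj, norm_mul]
    exact (mul_le_of_le_one_left (norm_nonneg _) hz).trans_lt <|
      norm_eval_szegoStep_sub_lt (ha j hj) (hΦ.natDegree_le hj') (hΨ.natDegree_le hj') (ih hj')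

end IsSzegoSeq

theorem stmt8
    (k : ℕ)
    (a : ℕ → ℂ) (ha : ∀ j < k, ‖a j‖ < 1)
    (Φ : ℕ → Polynomial ℂ) (hΦ0 : Φ 0 = 1)
    (hΦrec : ∀ j < k, Φ (j + 1) = X * Φ j - C (a j) * pstar j (Φ j))
    (Ψ : ℕ → Polynomial ℂ) (hΨ0 : Ψ 0 = 1)
    (hΨrec : ∀ j < k, Ψ (j + 1) = X * Ψ j + C (a j) * pstar j (Ψ j)) :
    ∀ z : ℂ, ‖z‖ ≤ 1 →
      (pstar k (Φ k) + pstar k (Ψ k)).eval z ≠ 0 ∧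
      ‖z * (Φ k - Ψ k).eval z‖ < ‖(pstar k (Φ k) + pstar k (Ψ k)).eval z‖ := by
  intro z hz
  have hΦ : IsSzegoSeq k a Φ := ⟨hΦ0, hΦrec⟩
  have hΨ : IsSzegoSeq k (-a) Ψ := ⟨hΨ0, fun j hj => by
    rw [hΨrec j hj, szegoStep, Pi.neg_apply, C_neg, neg_mul, sub_neg_eq_add]⟩
  have hlt := hΦ.norm_mul_eval_sub_lt ha hΨ hz le_rfl
  exact ⟨norm_pos_iff.1 ((norm_nonneg _).trans_lt hlt), hlt⟩
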